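/- Let p be a prime and G a group that is pseudo finite at p. Let τ = (P_0 < P_1 < ... < P_n) be a redundant chain of nontrivial finite p-subgroups of G, let Q be a Sylow p-subgroup of N_G(τ), let i be the maximal index with Q not contained in P_i, and let σ be the strictly increasing chain obtained from τ by inserting QP_i immediately after P_i (appending QP_n at the end if i = n). Then Q is a Sylow p-subgroup of N_G(σ), and consequently σ is a collapsible chain. -/

import Mathlib

open scoped Pointwise

/-- The conjugate subgroup `g⁻¹ P g`. -/
def conjSub {G : Type*} [Group G] (g : G) (P : Subgroup G) : Subgroup G :=
  P.map (MulAut.conj g⁻¹).toMonoidHom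

/-- `S` is a Sylow `p`-subgroup of the (possibly infinite) group `G`:
a finite `p`-subgroup such that every finite `p`-subgroup of `G` is conjugate
in `G` to a subgroup of `S`. -/
def IsSylow (p : ℕ) {G : Type*} [Group G] (S : Subgroup G) : Prop :=
  Finite S ∧ IsPGroup p S ∧
    ∀ Q : Subgroup G, Finite Q → IsPGroup p Q → ∃ g : G, conjSub g Q ≤ S

/-- `S` is a Sylow `p`-subgroup of the subgroup `N` of `G`:
`S` is a finite `p`-subgroup contained in `N` such that every finite `p`-subgroup
of `G` contained in `N` is conjugate by an element of `N` to a subgroup of `S`. -/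
def IsSylowIn (p : ℕ) {G : Type*} [Group G] (N S : Subgroup G) : Prop :=
  S ≤ N ∧ Finite S ∧ IsPGroup p S ∧
    ∀ Q : Subgroup G, Q ≤ N → Finite Q → IsPGroup p Q → ∃ g ∈ N, conjSub g Q ≤ S

/-- The normalizer of a chain of subgroups: the intersection of the normalizers
of the members of the chain. -/
def chainNorm {G : Type*} [Group G] {n : ℕ} (γ : Fin (n + 1) → Subgroup G) : Subgroup G :=
  ⨅ i, Subgroup.normalizer (γ i : Set G)

/-- `G` is pseudo finite at `p` if for every chain of finite `p`-subgroups of `G`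
(the trivial subgroup allowed in the chain), the normalizer of the chain has a
Sylow `p`-subgroup. -/
def PseudoFiniteAt (p : ℕ) (G : Type*) [Group G] : Prop :=
  ∀ (n : ℕ) (γ : Fin (n + 1) → Subgroup G), Monotone γ →
    (∀ i, Finite (γ i)) → (∀ i, IsPGroup p (γ i)) →
      ∃ S : Subgroup G, IsSylowIn p (chainNorm γ) S

/-- The member of the chain preceding position `i`, with the convention that the
member preceding position `0` is the trivial subgroup. -/
def chainPrev {G : Type*} [Group G] {n : ℕ} (γ : Fin (n + 1) → Subgroup G)
    (i : Fin (n + 1)) : Subgroup G :=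
  match i with
  | ⟨0, _⟩ => ⊥
  | ⟨j + 1, h⟩ => γ ⟨j, by omega⟩

/-- A strictly increasing chain `γ = (P_0 < ⋯ < P_n)` of nontrivial finite
`p`-subgroups is redundant if for every Sylow `p`-subgroup `Q` of `N_G(γ)` and
every `0 ≤ i ≤ n`, `P_i ≠ Q·P_{i-1}` (with `P_{-1} = 1`). -/
def IsRedundant (p : ℕ) {G : Type*} [Group G] {n : ℕ} (γ : Fin (n + 1) → Subgroup G) : Prop :=
  ∀ Q : Subgroup G, IsSylowIn p (chainNorm γ) Q →
    ∀ i : Fin (n + 1), (γ i : Set G) ≠ (Q : Set G) * (chainPrev γ i : Set G)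

/-- The chain obtained from `γ` by inserting the subgroup `H` immediately after
position `i`. -/
def insertChain {G : Type*} [Group G] {n : ℕ} (γ : Fin (n + 1) → Subgroup G)
    (i : Fin (n + 1)) (H : Subgroup G) : Fin (n + 2) → Subgroup G :=
  fun j =>
    if h : (j : ℕ) ≤ (i : ℕ) then γ ⟨j, by have := i.isLt; omega⟩
    else if h2 : (j : ℕ) = (i : ℕ) + 1 then H
    else γ ⟨(j : ℕ) - 1, by have := j.isLt; omega⟩

/-- The chain obtained from `σ` by deleting the member at position `i`. -/
def deleteChain {G : Type*} [Group G] {n : ℕ} (σ : Fin (n + 2) → Subgroup G)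
    (i : Fin (n + 2)) : Fin (n + 1) → Subgroup G :=
  fun j =>
    if h : (j : ℕ) < (i : ℕ) then σ ⟨j, by have := j.isLt; omega⟩
    else σ ⟨(j : ℕ) + 1, by have := j.isLt; omega⟩

/-! If a finite `p`-subgroup `R ≤ N_G(τ)` normalizes a finite `p`-subgroup `K` containing `Q`, then
`RK ∩ N_G(τ)` is a finite `p`-subgroup of `N_G(τ)` containing `Q`, hence equal to `Q`, so `R ≤ Q`.
Therefore `Q` remains Sylow in `N_G(τ) ∩ N_G(K)`, which for `K = QP_i` is `N_G(σ)`. -/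

section

variable {G : Type*} [Group G]

theorem finite_sup_of_le_normalizer {H K : Subgroup G} [Finite H] [Finite K]
    (hHK : H ≤ Subgroup.normalizer (K : Set G)) : Finite (H ⊔ K : Subgroup G) := by
  have hmul : ((H : Set G) * (K : Set G)).Finite := (Set.toFinite _).mul (Set.toFinite _)
  rw [← Subgroup.coe_mul_of_left_le_normalizer_right H K hHK] at hmul
  exact hmul.to_subtype

@[simp]
theorem conjSub_one (H : Subgroup G) : conjSub 1 H = H := by
  ext x
  simp [conjSub]

@[simp]
theorem card_conjSub (g : G) (H : Subgroup G) : Nat.card (conjSub g H) = Nat.card H :=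
  Subgroup.card_map_of_injective (MulAut.conj g⁻¹).injective

end

namespace IsSylowIn

variable {p : ℕ} {G : Type*} [Group G] {N Q : Subgroup G}

theorem eq_of_le (hQ : IsSylowIn p N Q) {H : Subgroup G} [Finite H] (hH : IsPGroup p H)
    (hHN : H ≤ N) (hQH : Q ≤ H) : Q = H := by
  obtain ⟨-, hQfin, -, hconj⟩ := hQ
  obtain ⟨g, -, hg⟩ := hconj H hHN ‹_› hH
  refine Subgroup.eq_of_le_of_card_ge hQH ?_
  calc
    Nat.card H = Nat.card (conjSub g H) := (card_conjSub g H).symm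
    _ ≤ Nat.card Q := Subgroup.card_le_of_le hg

theorem le_of_le_normalizer (hQ : IsSylowIn p N Q) {K R : Subgroup G} [Finite K] [Finite R]
    (hK : IsPGroup p K) (hR : IsPGroup p R) (hQK : Q ≤ K) (hRN : R ≤ N)
    (hRK : R ≤ Subgroup.normalizer (K : Set G)) : R ≤ Q := by
  have hfin : Finite (R ⊔ K : Subgroup G) := finite_sup_of_le_normalizer hRK
  have hpgroup : IsPGroup p (R ⊔ K : Subgroup G) := hR.to_sup_of_normal_right' hK hRK
  have : Finite ((R ⊔ K) ⊓ N : Subgroup G) := Finite.Set.subset _ (inf_le_left : _ ≤ R ⊔ K)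
  have hQ_eq : Q = (R ⊔ K) ⊓ N :=
    hQ.eq_of_le (hpgroup.to_le inf_le_left) inf_le_right (le_inf (hQK.trans le_sup_right) hQ.1)
  exact hQ_eq ▸ le_inf le_sup_left hRN

theorem inf_normalizer (hQ : IsSylowIn p N Q) {K : Subgroup G} [Finite K] (hK : IsPGroup p K)
    (hQK : Q ≤ K) : IsSylowIn p (N ⊓ Subgroup.normalizer (K : Set G)) Q := by
  refine ⟨le_inf hQ.1 (hQK.trans Subgroup.le_normalizer), hQ.2.1, hQ.2.2.1,
    fun R hR hRfin hRp => ⟨1, one_mem _, ?_⟩⟩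
  rw [conjSub_one]
  exact hQ.le_of_le_normalizer hK hRp hQK (hR.trans inf_le_left) (hR.trans inf_le_right)

end IsSylowIn

section Chain

variable {G : Type*} [Group G] {n : ℕ}

theorem insertChain_eq_insertNth (γ : Fin (n + 1) → Subgroup G) (i : Fin (n + 1))
    (H : Subgroup G) : insertChain γ i H = i.succ.insertNth H γ := by
  refine Fin.eq_insertNth_iff.2 ⟨by simp [insertChain], ?_⟩
  ext1 j
  rcases le_or_gt j i with hji | hij
  · simp [Fin.removeNth, insertChain, Fin.succAbove_succ_of_le i j hji, Fin.le_def.1 hji]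
  · have hij' := Fin.lt_def.1 hij
    simp [Fin.removeNth, insertChain, Fin.succAbove_of_lt_succ _ _ (Fin.succ_lt_succ_iff.2 hij),
      hij'.ne', (Nat.lt_succ_of_lt hij').not_ge]

@[simp]
theorem insertChain_succ (γ : Fin (n + 1) → Subgroup G) (i : Fin (n + 1)) (H : Subgroup G) :
    insertChain γ i H i.succ = H := by
  rw [insertChain_eq_insertNth, Fin.insertNth_apply_same]

@[simp]
theorem chainPrev_insertChain_succ (γ : Fin (n + 1) → Subgroup G) (i : Fin (n + 1))
    (H : Subgroup G) : chainPrev (insertChain γ i H) i.succ = γ i := by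
  change insertChain γ i H i.castSucc = γ i
  rw [insertChain_eq_insertNth, ← Fin.succAbove_succ_self i, Fin.insertNth_apply_succAbove]

theorem chainNorm_insertChain (γ : Fin (n + 1) → Subgroup G) (i : Fin (n + 1))
    (H : Subgroup G) :
    chainNorm (insertChain γ i H) = chainNorm γ ⊓ Subgroup.normalizer (H : Set G) := by
  refine eq_of_forall_le_iff fun K => ?_
  simp only [chainNorm, insertChain_eq_insertNth, le_inf_iff, le_iInf_iff,
    Fin.forall_iff_succAbove i.succ, Fin.insertNth_apply_same, Fin.insertNth_apply_succAbove,
    and_comm]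

end Chain

theorem insert_of_redundant_is_collapsible_general {p : ℕ} {G : Type*} [Group G] {n : ℕ}
    (τ : Fin (n + 1) → Subgroup G) {Q : Subgroup G} (hQ : IsSylowIn p (chainNorm τ) Q)
    (i : Fin (n + 1)) [Finite (τ i)] (hpg : IsPGroup p (τ i)) :
    IsSylowIn p (chainNorm (insertChain τ i (Q ⊔ τ i))) Q ∧
    ¬ IsRedundant p (insertChain τ i (Q ⊔ τ i)) := by
  have hQi : Q ≤ Subgroup.normalizer (τ i : Set G) := hQ.1.trans (iInf_le _ i)
  have hQfin : Finite Q := hQ.2.1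
  have hfin : Finite (Q ⊔ τ i : Subgroup G) := finite_sup_of_le_normalizer hQi
  have hpgroup : IsPGroup p (Q ⊔ τ i : Subgroup G) := hQ.2.2.1.to_sup_of_normal_right' hpg hQi
  have hSylow : IsSylowIn p (chainNorm (insertChain τ i (Q ⊔ τ i))) Q := by
    rw [chainNorm_insertChain]
    exact hQ.inf_normalizer hpgroup le_sup_left
  refine ⟨hSylow, fun hred => hred Q hSylow i.succ ?_⟩
  rw [insertChain_succ, chainPrev_insertChain_succ]
  exact Subgroup.coe_mul_of_left_le_normalizer_right Q (τ i) hQi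

/-- In a group pseudo finite at `p`, if `τ` is a redundant chain of nontrivial
finite `p`-subgroups, `Q` is a Sylow `p`-subgroup of `N_G(τ)`, `i` is the
maximal index with `Q` not contained in `P_i`, and `σ` is obtained from `τ` by
inserting `Q·P_i` immediately after position `i`, then `Q` is a Sylow
`p`-subgroup of `N_G(σ)`; consequently `σ` is collapsible (not redundant, of
dimension at least `1`). -/
theorem insert_of_redundant_is_collapsible (p : ℕ) (hp : p.Prime) {G : Type*} [Group G]
    (hG : PseudoFiniteAt p G) {n : ℕ}
    (τ : Fin (n + 1) → Subgroup G) (hmono : StrictMono τ)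
    (hnt : ∀ i, τ i ≠ ⊥) (hfin : ∀ i, Finite (τ i)) (hpg : ∀ i, IsPGroup p (τ i))
    (hred : IsRedundant p τ)
    (Q : Subgroup G) (hQ : IsSylowIn p (chainNorm τ) Q)
    (i : Fin (n + 1)) (hi : ¬ Q ≤ τ i) (himax : ∀ j : Fin (n + 1), i < j → Q ≤ τ j) :
    IsSylowIn p (chainNorm (insertChain τ i (Q ⊔ τ i))) Q ∧
    ¬ IsRedundant p (insertChain τ i (Q ⊔ τ i)) :=
  have := hfin i
  insert_of_redundant_is_collapsible_general τ hQ i (hpg i)
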